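/- arXiv:2011.11502 — 5 statements merged into one kernel-verified Lean document; each statement's English description precedes it below -/
import Mathlib

section
/- Cauchy formula for repeated integration: for every natural number n ≥ 1, every real a, every x ≥ a, and every continuous function f : ℝ → ℝ, the n-fold iterated integral of f with lower limit a satisfies (ₐI_xⁿ f)(x) = (1/(n-1)!) ∫_a^x (x-t)^{n-1} f(t) dt, where ₐI_x f denotes the operator g ↦ (x ↦ ∫_a^x g(t) dt) and ₐI_xⁿ is its n-fold composition. -/
open MeasureTheory intervalIntegral

/-!
Induction on the number of integrations, for all continuous `f` at once. Writing the iterate as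
`Iⁿ⁺² f = Iⁿ⁺¹ (I f)`, the inductive hypothesis applies to the continuous function
`F y = ∫ t in a..y, f t`, and one integration by parts (`integral_pow_mul_primitive`) moves the
derivative from `(x - t) ^ (m + 1)` onto `F`; both boundary terms vanish.
-/

/-- Integration by parts against `v t = -(x - t) ^ (m + 1) / (m + 1)`, a primitive of `(x - t) ^ m`
which vanishes at `t = x`, while the primitive of `f` vanishes at `t = a`. -/
lemma integral_pow_mul_primitive (m : ℕ) (a x : ℝ) {f : ℝ → ℝ} (hf : Continuous f) :
    ∫ t in a..x, (x - t) ^ m * ∫ s in a..t, f s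
      = (1 / ((m : ℝ) + 1)) * ∫ t in a..x, (x - t) ^ (m + 1) * f t := by
  have hm : (m : ℝ) + 1 ≠ 0 := by positivity
  have hF : ∀ t ∈ Set.uIcc a x, HasDerivAt (fun y => ∫ s in a..y, f s) (f t) t :=
    fun t _ => hf.integral_hasStrictDerivAt a t |>.hasDerivAt
  have hv : ∀ t ∈ Set.uIcc a x,
      HasDerivAt (fun y : ℝ => -(x - y) ^ (m + 1) / ((m : ℝ) + 1)) ((x - t) ^ m) t := by
    intro t _
    have h := ((((hasDerivAt_id t).const_sub x).pow (m + 1)).neg).div_const ((m : ℝ) + 1)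
    refine h.congr_deriv ?_
    simp only [id, Nat.add_sub_cancel]
    push_cast
    field_simp
  have key := integral_mul_deriv_eq_deriv_mul hF hv (hf.intervalIntegrable a x)
    ((by fun_prop : Continuous fun t : ℝ => (x - t) ^ m).intervalIntegrable a x)
  simp only [integral_same, sub_self, zero_mul, ne_eq, Nat.succ_ne_zero, not_false_eq_true,
    zero_pow, neg_zero, zero_div, mul_zero, zero_sub] at key
  simp_rw [mul_comm (_ ^ m)]
  rw [key, ← intervalIntegral.integral_neg, ← intervalIntegral.integral_const_mul]
  congr 1
  ext t
  field_simp

lemma iterate_integral_succ (m : ℕ) (a x : ℝ) (f : ℝ → ℝ) (hf : Continuous f) :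
    (fun g : ℝ → ℝ => fun y : ℝ => ∫ t in a..y, g t)^[m + 1] f x
      = (1 / (Nat.factorial m : ℝ)) * ∫ t in a..x, (x - t) ^ m * f t := by
  induction m generalizing f with
  | zero => simp
  | succ m ih =>
    have hF : Continuous fun y => ∫ t in a..y, f t :=
      continuous_primitive (fun _ _ => hf.intervalIntegrable _ _) a
    rw [Function.iterate_succ_apply, ih _ hF, integral_pow_mul_primitive m a x hf,
      Nat.factorial_succ]
    push_cast
    field_simp

/-- Cauchy formula for repeated integration: the `n`-fold iterate of the
integration operator `g ↦ (x ↦ ∫ t in a..x, g t)` applied to a continuous `f`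
equals `(1/(n-1)!) ∫ t in a..x, (x-t)^(n-1) * f t` for `x ≥ a`. -/
theorem cauchy_repeated_integration
    (n : ℕ) (hn : 1 ≤ n) (a : ℝ) (f : ℝ → ℝ) (hf : Continuous f)
    (x : ℝ) (hx : a ≤ x) :
    (fun g : ℝ → ℝ => fun y : ℝ => ∫ t in a..y, g t)^[n] f x
      = (1 / (Nat.factorial (n - 1) : ℝ)) * ∫ t in a..x, (x - t) ^ (n - 1) * f t := by
  obtain ⟨m, rfl⟩ := Nat.exists_eq_add_of_le' hn
  exact iterate_integral_succ m a x f hf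
end

section
/- Laplace transform of the two-parameter Mittag-Leffler function: for real α > 0, β > 0, real a, and real s > 0 with |a| < s^α, one has ∫_0^∞ e^{-st} t^{β-1} E_{α,β}(a t^α) dt = s^{α-β} / (s^α - a). -/
/-!
Expand `E_{α,β}(a t^α)` in its power series and integrate term by term against
`e^{-st} t^{β-1}`. By Euler's integral, the `k`-th term contributes
`a^k / Γ(αk+β) * Γ(αk+β) / s^(αk+β) = s^{-β} (a / s^α)^k`, and the resulting geometric series
converges, to `s^{α-β} / (s^α - a)`, because `|a| < s^α`. The same computation with `|a|` in place
of `a` shows that the integrals of the absolute values are summable, which justifies exchanging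
sum and integral.
-/

open MeasureTheory Real

/-- The two-parameter Mittag-Leffler function `E_{α,β}(t) = Σ_k t^k / Γ(αk+β)`. -/
noncomputable def mittagLeffler (α β t : ℝ) : ℝ :=
  ∑' k : ℕ, t ^ k / Real.Gamma (α * k + β)

/-- Euler's integral for the `k`-th term of the expanded integrand, with `c` the numerator of the
coefficient; it is used both for `c = a ^ k` and for `c = |a| ^ k`. -/
lemma integral_laplace_term (α β s : ℝ) (hα : 0 < α) (hβ : 0 < β) (hs : 0 < s) (c : ℝ) (k : ℕ) :
    ∫ t in Set.Ioi (0:ℝ),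
        c / Real.Gamma (α * k + β) * (t ^ (α * k + β - 1) * Real.exp (-(s * t)))
      = s ^ (-β) * (c / (s ^ α) ^ k) := by
  have hp : 0 < α * k + β := by positivity
  have hΓ := (Real.Gamma_pos_of_pos hp).ne'
  rw [integral_const_mul, integral_rpow_mul_exp_neg_mul_Ioi hp hs, one_div,
    Real.inv_rpow hs.le, Real.rpow_add hs, Real.rpow_mul_natCast hs.le, Real.rpow_neg hs.le]
  field_simp

lemma integrableOn_laplace_term (α β s : ℝ) (hα : 0 < α) (hβ : 0 < β) (hs : 0 < s) (c : ℝ)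
    (k : ℕ) :
    IntegrableOn (fun t : ℝ =>
        c / Real.Gamma (α * k + β) * (t ^ (α * k + β - 1) * Real.exp (-(s * t))))
      (Set.Ioi 0) := by
  have hp : 0 < α * k + β := by positivity
  have h := integrableOn_rpow_mul_exp_neg_mul_rpow (p := 1) (s := α * k + β - 1) (by linarith)
    one_pos hs
  simp only [Real.rpow_one, neg_mul] at h
  exact h.const_mul _

/-- Laplace transform of the two-parameter Mittag-Leffler function:
`∫_0^∞ e^{-st} t^{β-1} E_{α,β}(a t^α) dt = s^{α-β} / (s^α - a)`
for `α, β > 0`, `s > 0` and `|a| < s^α`. -/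
theorem laplace_mittagLeffler
    (α β a s : ℝ) (hα : 0 < α) (hβ : 0 < β) (hs : 0 < s)
    (ha : |a| < s ^ α) :
    ∫ t in Set.Ioi (0:ℝ),
        Real.exp (-s * t) * t ^ (β - 1) * mittagLeffler α β (a * t ^ α)
      = s ^ (α - β) / (s ^ α - a) := by
  have hsα : 0 < s ^ α := Real.rpow_pos_of_pos hs α
  have hr : |a / s ^ α| < 1 := by
    rwa [abs_div, abs_of_pos hsα, div_lt_one hsα]
  have hsum : Summable fun k : ℕ => ∫ t in Set.Ioi (0:ℝ),
      ‖a ^ k / Real.Gamma (α * k + β) * (t ^ (α * k + β - 1) * Real.exp (-(s * t)))‖ := by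
    have hnorm (k : ℕ) : ∫ t in Set.Ioi (0:ℝ),
        ‖a ^ k / Real.Gamma (α * k + β) * (t ^ (α * k + β - 1) * Real.exp (-(s * t)))‖
        = s ^ (-β) * |a / s ^ α| ^ k := by
      rw [abs_div, abs_of_pos hsα, div_pow,
        ← integral_laplace_term α β s hα hβ hs (|a| ^ k) k]
      refine setIntegral_congr_fun measurableSet_Ioi fun t (ht : 0 < t) => ?_
      have hΓ : 0 < Real.Gamma (α * k + β) := Real.Gamma_pos_of_pos (by positivity)
      have htp : 0 < t ^ (α * k + β - 1) * Real.exp (-(s * t)) := by positivity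
      simp only [norm_mul _ (_ * _), norm_div, norm_pow, Real.norm_eq_abs, abs_of_pos hΓ,
        abs_of_pos htp]
    simp only [hnorm]
    exact (summable_geometric_of_abs_lt_one (by rwa [abs_abs])).mul_left _
  have hswap := (hasSum_integral_of_summable_integral_norm
    (fun k => integrableOn_laplace_term α β s hα hβ hs (a ^ k) k) hsum).tsum_eq
  have hexpand : ∫ t in Set.Ioi (0:ℝ),
        Real.exp (-s * t) * t ^ (β - 1) * mittagLeffler α β (a * t ^ α)
      = ∫ t in Set.Ioi (0:ℝ), ∑' k : ℕ,
        a ^ k / Real.Gamma (α * k + β) * (t ^ (α * k + β - 1) * Real.exp (-(s * t))) := by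
    refine setIntegral_congr_fun measurableSet_Ioi fun t (ht : 0 < t) => ?_
    simp only [mittagLeffler]
    rw [← tsum_mul_left]
    refine tsum_congr fun k => ?_
    rw [add_sub_assoc, Real.rpow_add ht, Real.rpow_mul_natCast ht.le, mul_pow, neg_mul]
    ring
  rw [hexpand, ← hswap]
  simp only [integral_laplace_term α β s hα hβ hs, ← div_pow]
  have hne : s ^ α - a ≠ 0 := (sub_pos.2 ((le_abs_self a).trans_lt ha)).ne'
  rw [tsum_mul_left, tsum_geometric_of_abs_lt_one hr, sub_eq_add_neg α β, Real.rpow_add hs,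
    one_sub_div hsα.ne', inv_div]
  ring
end

section
/- Derivative of the one-parameter Mittag-Leffler function of a power argument: for real α > 0, real a, and every t > 0, the function t ↦ E_α(a t^α) is differentiable at t and d/dt E_α(a t^α) = a t^{α-1} E_{α,α}(a t^α). -/
/-!
The Mittag-Leffler series converges for every argument, because `Γ` eventually dominates every
exponential: cutting Euler's integral at `C` gives `Γ(s) ≥ C^(s-1) e^(-C)` for `s ≥ 1`, and choosing
`C` with `C^α > |x|` compares the series with a geometric one (`summable_mittagLeffler`).

Hence `E_α` may be differentiated termwise. Since `Γ(α(k+1)+1) = α(k+1) Γ(αk+α)`, the derivative of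
its `(k+1)`-st term is `x^k / (α Γ(αk+α))`, so that `E_α' = E_{α,α} / α`
(`hasDerivAt_mittagLeffler_one`). The chain rule with `u ↦ a u^α` cancels the factor `α`.
-/

open MeasureTheory Real

/-- Euler's integral restricted to `(C, ∞)`, where `x^(s-1) ≥ C^(s-1)`. -/
lemma rpow_mul_exp_neg_le_Gamma {C s : ℝ} (hC : 0 < C) (hs : 1 ≤ s) :
    C ^ (s - 1) * exp (-C) ≤ Gamma s := by
  have hs0 : 0 < s := by linarith
  have hsub : Set.Ioi C ⊆ Set.Ioi 0 := Set.Ioi_subset_Ioi hC.le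
  have hint := GammaIntegral_convergent hs0
  rw [Gamma_eq_integral hs0, ← integral_exp_neg_Ioi, ← integral_const_mul]
  calc ∫ x in Set.Ioi C, C ^ (s - 1) * exp (-x)
      ≤ ∫ x in Set.Ioi C, exp (-x) * x ^ (s - 1) := by
        refine setIntegral_mono_on ((integrableOn_exp_neg_Ioi C).const_mul _)
          (hint.mono_set hsub) measurableSet_Ioi fun x hx => ?_
        rw [mul_comm]
        have hx : C < x := hx
        gcongr
    _ ≤ ∫ x in Set.Ioi 0, exp (-x) * x ^ (s - 1) := by
        refine setIntegral_mono_set hint ?_ hsub.eventuallyLE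
        filter_upwards [ae_restrict_mem measurableSet_Ioi] with x hx
        have hx : 0 < x := hx
        simp only [Pi.zero_apply]
        positivity

lemma summable_mittagLeffler {α : ℝ} (hα : 0 < α) (β x : ℝ) :
    Summable fun k : ℕ => x ^ k / Gamma (α * k + β) := by
  set C : ℝ := (|x| + 1) ^ α⁻¹ with hCdef
  have hx1 : 0 < |x| + 1 := by positivity
  have hC : 0 < C := by positivity
  have hCα : C ^ α = |x| + 1 := rpow_inv_rpow hx1.le hα.ne'
  have hgeo : Summable fun k : ℕ => exp C * C ^ (1 - β) * (|x| / (|x| + 1)) ^ k :=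
    (summable_geometric_of_lt_one (by positivity)
      (by rw [div_lt_one hx1]; linarith)).mul_left _
  obtain ⟨N, hN⟩ := exists_nat_ge ((1 - β) / α)
  refine Summable.of_norm_bounded_eventually_nat hgeo ?_
  filter_upwards [Filter.eventually_ge_atTop N] with k hk
  have hs : 1 ≤ α * k + β := by
    have h1 : (1 - β) / α ≤ k := hN.trans (by exact_mod_cast hk)
    rw [div_le_iff₀ hα] at h1
    linarith
  have hG := rpow_mul_exp_neg_le_Gamma hC hs
  have hpos : 0 < C ^ (α * k + β - 1) * exp (-C) := by positivity
  have hGpos : 0 < Gamma (α * k + β) := hpos.trans_le hG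
  rw [norm_div, norm_pow, norm_eq_abs, norm_eq_abs, abs_of_pos hGpos]
  calc |x| ^ k / Gamma (α * k + β) ≤ |x| ^ k / (C ^ (α * k + β - 1) * exp (-C)) := by gcongr
    _ = exp C * C ^ (1 - β) * (|x| / (|x| + 1)) ^ k := by
        have e : C ^ (α * k + β - 1) = (|x| + 1) ^ k / C ^ (1 - β) := by
          rw [show α * k + β - 1 = α * k - (1 - β) by ring, rpow_sub hC, rpow_mul hC.le, hCα,
            rpow_natCast]
        have hC1 : 0 < C ^ (1 - β) := by positivity
        rw [e, exp_neg, div_pow]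
        field_simp

lemma succ_mul_pow_div_Gamma {α : ℝ} (hα : 0 < α) (x : ℝ) (k : ℕ) :
    ((k + 1 : ℕ) : ℝ) * x ^ (k + 1 - 1) / Gamma (α * (k + 1 : ℕ) + 1)
      = α⁻¹ * (x ^ k / Gamma (α * k + α)) := by
  have h : α * ((k + 1 : ℕ) : ℝ) = α * k + α := by push_cast; ring
  have hpos : 0 < α * (k : ℝ) + α := by positivity
  have hG := Gamma_pos_of_pos hpos
  rw [← h] at hpos hG ⊢
  rw [Gamma_add_one hpos.ne']
  have hk : ((k + 1 : ℕ) : ℝ) ≠ 0 := by positivity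
  rw [Nat.add_sub_cancel]
  field_simp

/-- `E_α' = E_{α,α} / α`. -/
lemma hasDerivAt_mittagLeffler_one {α : ℝ} (hα : 0 < α) (x : ℝ) :
    HasDerivAt (mittagLeffler α 1) (α⁻¹ * mittagLeffler α α x) x := by
  set R : ℝ := |x| + 1
  have hsum : ∀ y : ℝ, Summable fun k : ℕ => (k : ℝ) * y ^ (k - 1) / Gamma (α * k + 1) := by
    intro y
    rw [← summable_nat_add_iff 1]
    simpa only [succ_mul_pow_div_Gamma hα] using (summable_mittagLeffler hα α y).mul_left α⁻¹
  have hx : x ∈ Metric.ball (0 : ℝ) R := by simp [R]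
  have key := hasDerivAt_tsum_of_isPreconnected (hsum R) Metric.isOpen_ball
    (convex_ball (0 : ℝ) R).isPreconnected
    (g := fun (k : ℕ) (y : ℝ) => y ^ k / Gamma (α * k + 1))
    (g' := fun (k : ℕ) (y : ℝ) => (k : ℝ) * y ^ (k - 1) / Gamma (α * k + 1))
    (fun k y _ => (hasDerivAt_pow k y).div_const _)
    (fun k y hy => by
      have hG : 0 < Gamma (α * k + 1) := Gamma_pos_of_pos (by positivity)
      have hy : |y| ≤ R := by simpa using (Metric.mem_ball.1 hy).le
      rw [norm_div, norm_mul, norm_pow, norm_eq_abs, norm_eq_abs, norm_eq_abs, abs_of_pos hG,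
        Nat.abs_cast]
      gcongr)
    hx (summable_mittagLeffler hα 1 x) hx
  rw [(hsum x).tsum_eq_zero_add] at key
  simp only [succ_mul_pow_div_Gamma hα, tsum_mul_left, Nat.cast_zero, zero_mul, zero_div,
    zero_add] at key
  exact key

/-- Derivative of the one-parameter Mittag-Leffler function of a power
argument: for `α > 0` and `t > 0`,
`d/dt E_α(a t^α) = a t^{α-1} E_{α,α}(a t^α)`. -/
theorem hasDerivAt_mittagLeffler_rpow
    (α a : ℝ) (hα : 0 < α) (t : ℝ) (ht : 0 < t) :
    HasDerivAt (fun u : ℝ => mittagLeffler α 1 (a * u ^ α))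
      (a * t ^ (α - 1) * mittagLeffler α α (a * t ^ α)) t := by
  have h1 : HasDerivAt (fun u : ℝ => a * u ^ α) (a * (α * t ^ (α - 1))) t :=
    (hasDerivAt_rpow_const (Or.inl ht.ne')).const_mul a
  convert! (hasDerivAt_mittagLeffler_one hα (a * t ^ α)).comp t h1 using 1
  field_simp
end

section
/- Caputo fractional derivative of the sine function: for real α with 0 < α < 1, real c, real a, and every x > a, (1/Γ(1-α)) ∫_a^x (x-t)^{-α} c cos(c(t-a)) dt = c (x-a)^{1-α} E_{2,2-α}( -c² (x-a)² ). -/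
/-!
The cosine is expanded in its power series and integrated term by term against the kernel
`(x - t)^(-α)`. Dominated convergence allows this: on `[a, x]` the `n`-th term is at most
`(x - t)^(-α) |c| (|c| (x - a))^(2n) / (2n)!`, a summable multiple of an integrable function.
Each term is a Beta integral (`integral_kernel_mul_pow`), and its value
`(x - a)^(2n + 1 - α) Γ(1 - α) (2n)! / Γ(2n + 2 - α)` cancels the factorial and the prefactor
`1 / Γ(1 - α)`, leaving the Mittag-Leffler series.
-/

open MeasureTheory Real

/-- The Beta integral, rescaled to `[a, x]` with a natural power on the left endpoint. -/
lemma integral_kernel_mul_pow (α a x : ℝ) (hα1 : α < 1) (hx : a < x) (n : ℕ) :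
    ∫ t in a..x, (x - t) ^ (-α) * (t - a) ^ n
      = (x - a) ^ (n + (1 - α)) * (Real.Gamma (1 - α) * n.factorial / Real.Gamma (n + (2 - α))) := by
  have hL : 0 < x - a := sub_pos.2 hx
  have shift : ∫ t in a..x, (x - t) ^ (-α) * (t - a) ^ n
      = ∫ t in (0 : ℝ)..(x - a), (x - a - t) ^ (-α) * t ^ n := by
    have h := intervalIntegral.integral_comp_sub_right (a := a) (b := x)
      (fun t : ℝ => (x - a - t) ^ (-α) * t ^ n) a
    simpa using h
  rw [shift]
  have h := Complex.betaIntegral_scaled ((n : ℂ) + 1) ((1 - α : ℝ) : ℂ) hL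
  rw [Complex.betaIntegral_eq_Gamma_mul_div _ _ (by simp; positivity)
    (by rw [Complex.ofReal_re]; linarith)] at h
  apply Complex.ofReal_injective
  rw [← intervalIntegral.integral_ofReal]
  have e1 : (n : ℂ) + 1 + ((1 - α : ℝ) : ℂ) - 1 = ((n + (1 - α) : ℝ) : ℂ) := by
    push_cast; ring
  have e2 : (n : ℂ) + 1 + ((1 - α : ℝ) : ℂ) = ((n + (2 - α) : ℝ) : ℂ) := by
    push_cast; ring
  rw [e1, e2, Complex.Gamma_nat_eq_factorial, Complex.Gamma_ofReal, Complex.Gamma_ofReal,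
    ← Complex.ofReal_cpow hL.le] at h
  have lhs : ∫ t in (0 : ℝ)..(x - a), (((x - a - t) ^ (-α) * t ^ n : ℝ) : ℂ)
      = ∫ t in (0 : ℝ)..(x - a), (t : ℂ) ^ ((n : ℂ) + 1 - 1)
        * (((x - a : ℝ) : ℂ) - t) ^ (((1 - α : ℝ) : ℂ) - 1) := by
    refine intervalIntegral.integral_congr fun t ht => ?_
    rw [Set.uIcc_of_le hL.le] at ht
    have e3 : ((1 - α : ℝ) : ℂ) - 1 = ((-α : ℝ) : ℂ) := by push_cast; ring
    simp only [add_sub_cancel_right, Complex.cpow_natCast, e3]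
    rw [← Complex.ofReal_sub, ← Complex.ofReal_cpow (sub_nonneg.2 ht.2)]
    push_cast
    ring
  rw [lhs, h]
  push_cast
  ring

lemma intervalIntegrable_kernel (α a x : ℝ) (hα1 : α < 1) :
    IntervalIntegrable (fun t => (x - t) ^ (-α)) volume a x := by
  have h := (intervalIntegral.intervalIntegrable_rpow' (a := x - a) (b := 0)
    (r := -α) (by linarith)).comp_sub_left x
  simpa using h

/-- Caputo fractional derivative of the sine function: for `0 < α < 1` and
`x > a`, `(1/Γ(1-α)) ∫_a^x (x-t)^{-α} c cos(c(t-a)) dt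
  = c (x-a)^{1-α} E_{2,2-α}( -c² (x-a)² )`. -/
theorem caputo_deriv_sin
    (α c a : ℝ) (hα0 : 0 < α) (hα1 : α < 1) (x : ℝ) (hx : a < x) :
    (1 / Real.Gamma (1 - α)) *
        ∫ t in a..x, (x - t) ^ (-α) * (c * Real.cos (c * (t - a)))
      = c * (x - a) ^ (1 - α) * mittagLeffler 2 (2 - α) (-c ^ 2 * (x - a) ^ 2) := by
  have hL : 0 < x - a := sub_pos.2 hx
  have hG : Real.Gamma (1 - α) ≠ 0 := (Real.Gamma_pos_of_pos (by linarith)).ne'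
  have hsum : Summable fun n : ℕ => (|c| * (x - a)) ^ (2 * n) / ((2 * n).factorial : ℝ) :=
    (Real.hasSum_cosh _).summable
  have key : HasSum
      (fun n : ℕ => ∫ t in a..x, (x - t) ^ (-α) *
        (c * ((-1) ^ n * (c * (t - a)) ^ (2 * n) / ((2 * n).factorial : ℝ))))
      (∫ t in a..x, (x - t) ^ (-α) * (c * Real.cos (c * (t - a)))) := by
    refine intervalIntegral.hasSum_integral_of_dominated_convergence
      (fun n t => (x - t) ^ (-α) * |c| *
        ((|c| * (x - a)) ^ (2 * n) / ((2 * n).factorial : ℝ))) ?_ ?_ ?_ ?_ ?_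
    · intro n
      exact Measurable.aestronglyMeasurable (by fun_prop)
    · intro n
      refine Filter.Eventually.of_forall fun t ht => ?_
      rw [Set.uIoc_of_le hx.le] at ht
      have h1 : 0 ≤ x - t := sub_nonneg.2 ht.2
      have h2 : 0 ≤ t - a := sub_nonneg.2 ht.1.le
      have h3 : t - a ≤ x - a := by linarith [ht.2]
      have h4 : ‖(x - t) ^ (-α) *
          (c * ((-1) ^ n * (c * (t - a)) ^ (2 * n) / ((2 * n).factorial : ℝ)))‖
          = (x - t) ^ (-α) * |c| * ((|c| * (t - a)) ^ (2 * n) / ((2 * n).factorial : ℝ)) := by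
        simp only [Real.norm_eq_abs, abs_mul, abs_div, abs_pow, abs_neg, abs_one, one_pow,
          one_mul, abs_of_nonneg h2, Nat.abs_cast, abs_of_nonneg (Real.rpow_nonneg h1 (-α))]
        ring
      rw [h4]
      gcongr
    · exact Filter.Eventually.of_forall fun t _ => hsum.mul_left _
    · simp only [tsum_mul_left]
      exact ((intervalIntegrable_kernel α a x hα1).mul_const _).mul_const _
    · exact Filter.Eventually.of_forall fun t _ =>
        ((Real.hasSum_cos (c * (t - a))).mul_left c).mul_left _
  rw [← (key.mul_left (1 / Real.Gamma (1 - α))).tsum_eq, mittagLeffler, ← tsum_mul_left]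
  refine tsum_congr fun n => ?_
  have hterm : ∫ t in a..x, (x - t) ^ (-α) *
        (c * ((-1) ^ n * (c * (t - a)) ^ (2 * n) / ((2 * n).factorial : ℝ)))
      = (c * (-1) ^ n * c ^ (2 * n) / ((2 * n).factorial : ℝ)) *
        ∫ t in a..x, (x - t) ^ (-α) * (t - a) ^ (2 * n) := by
    rw [← intervalIntegral.integral_const_mul]
    congr 1 with t
    rw [mul_pow]
    ring
  have hf : ((2 * n).factorial : ℝ) ≠ 0 := by positivity
  have hG2 : Real.Gamma (2 * n + (2 - α)) ≠ 0 :=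
    (Real.Gamma_pos_of_pos (by have : (0 : ℝ) ≤ n := n.cast_nonneg; linarith)).ne'
  have hpow : (-c ^ 2 * (x - a) ^ 2) ^ n = (-1) ^ n * c ^ (2 * n) * (x - a) ^ (2 * n) := by
    rw [pow_mul, pow_mul, ← mul_pow, ← mul_pow]
    ring
  rw [hterm, integral_kernel_mul_pow α a x hα1 hx, Real.rpow_add hL, Real.rpow_natCast, hpow]
  push_cast
  field_simp
end

section
/- Convolution theorem for the Laplace transform: if F₁ and F₂ are measurable functions on [0,∞) such that t ↦ e^{-st} F₁(t) and t ↦ e^{-st} F₂(t) are integrable on (0,∞) for a real s > 0 (with suitable absolute integrability of the double integral), then ∫_0^∞ e^{-st} ( ∫_0^t F₁(t-u) F₂(u) du ) dt = ( ∫_0^∞ e^{-st} F₁(t) dt ) ( ∫_0^∞ e^{-st} F₂(t) dt ). -/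
open MeasureTheory Real

/-- Convolution theorem for the Laplace transform:
`L{F₁ * F₂}(s) = L{F₁}(s) · L{F₂}(s)`, where
`(F₁ * F₂)(t) = ∫_0^t F₁(t-u) F₂(u) du`, under measurability, integrability
of `t ↦ e^{-st} Fᵢ(t)` on `(0,∞)` and absolute integrability of the
associated double integral. -/
theorem laplace_convolution
    (s : ℝ) (hs : 0 < s) (F₁ F₂ : ℝ → ℝ)
    (hm₁ : Measurable F₁) (hm₂ : Measurable F₂)
    (hint₁ : IntegrableOn (fun t : ℝ => Real.exp (-s * t) * F₁ t) (Set.Ioi 0))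
    (hint₂ : IntegrableOn (fun t : ℝ => Real.exp (-s * t) * F₂ t) (Set.Ioi 0))
    (hint : IntegrableOn
      (fun p : ℝ × ℝ => Real.exp (-s * (p.1 + p.2)) * (F₁ p.1 * F₂ p.2))
      (Set.Ioi 0 ×ˢ Set.Ioi 0)) :
    ∫ t in Set.Ioi (0:ℝ),
        Real.exp (-s * t) * ∫ u in (0:ℝ)..t, F₁ (t - u) * F₂ u
      = (∫ t in Set.Ioi (0:ℝ), Real.exp (-s * t) * F₁ t)
        * ∫ t in Set.Ioi (0:ℝ), Real.exp (-s * t) * F₂ t := by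
  -- Since `e^{-st} = e^{-su} e^{-s(t-u)}`, the weighted convolution is the convolution of the
  -- weighted functions, whose integral is the product of the integrals.
  have key := integral_posConvolution (μ := volume) (ν := volume) hint₂ hint₁
    (ContinuousLinearMap.mul ℝ ℝ)
  simp only [ContinuousLinearMap.mul_apply'] at key
  rw [mul_comm, ← key]
  refine integral_congr_ae (Filter.Eventually.of_forall fun t => ?_)
  simp only [← intervalIntegral.integral_const_mul]
  refine intervalIntegral.integral_congr fun u _ => ?_
  have h : Real.exp (-s * t) = Real.exp (-s * u) * Real.exp (-s * (t - u)) := by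
    rw [← Real.exp_add]
    ring_nf
  simp only [h]
  ring
end
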